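/- Let p ∈ (0,1) with p ≠ 1/2, λ = min(p, 1−p), let q ≥ 2 be real, put L = ln(λ/(1−λ)) (< 0), and set γ = √( sinh(−(1/q)·L) / sinh(−(1 − 1/q)·L) ). Then for every f : {−1,1}^n → ℝ, under the p-biased measure μ one has ‖T_γ f‖_q ≤ ‖f‖₂. -/

import Mathlib

open Filter Function Real

noncomputable def pwt (p : ℝ) {n : ℕ} (x : Fin n → Bool) : ℝ :=
  ∏ i, if x i then p else 1 - p

noncomputable def pE (p : ℝ) {n : ℕ} (f : (Fin n → Bool) → ℝ) : ℝ :=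
  ∑ x, pwt p x * f x

noncomputable def pNorm (p q : ℝ) {n : ℕ} (f : (Fin n → Bool) → ℝ) : ℝ :=
  (pE p fun x => |f x| ^ q) ^ (1 / q)

noncomputable def pVar (p : ℝ) {n : ℕ} (f : (Fin n → Bool) → ℝ) : ℝ :=
  pE p (fun x => f x ^ 2) - (pE p f) ^ 2

noncomputable def condE (p : ℝ) {n : ℕ} (i : Fin n) (f : (Fin n → Bool) → ℝ) :
    (Fin n → Bool) → ℝ :=
  fun x => (1 - p) * f (Function.update x i false) + p * f (Function.update x i true)

noncomputable def chi (p : ℝ) {n : ℕ} (S : Finset (Fin n)) (x : Fin n → Bool) : ℝ :=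
  ∏ i ∈ S, ((if x i then (1:ℝ) else -1) - (2 * p - 1)) / (2 * Real.sqrt (p * (1 - p)))

noncomputable def fhat (p : ℝ) {n : ℕ} (f : (Fin n → Bool) → ℝ) (S : Finset (Fin n)) : ℝ :=
  pE p fun x => f x * chi p S x

noncomputable def noiseOp (p δ : ℝ) {n : ℕ} (f : (Fin n → Bool) → ℝ) :
    (Fin n → Bool) → ℝ :=
  fun x => ∑ S : Finset (Fin n), δ ^ S.card * fhat p f S * chi p S x

/-!
Let `r` be the exponent conjugate to `q`. The noise operator is self-adjoint, so the bound from
`L²` to `L^q` is dual to the bound from `L^r` to `L²`, and the latter tensorises: induction on the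
number of bits reduces it to an inequality for a function on one biased bit.

For one bit, write `p = e^w / (2 cosh w)`, put `k = 2 / r ∈ [1, 2]`, and normalise the two values
of the function to `e^{t/r}` and `e^{-t/r}`. With `v = t + w` the right-hand side becomes
`(2 cosh v)^k` up to a constant, while the left-hand side is a combination of `1`, `e^{kv}` and
`e^{-kv}`. The parameter `γ` is the one that makes the coefficients of `e^{kv}` and `e^{-kv}`
equal, and the inequality then says that `(2 cosh v)^k`, as a function of `cosh (kv)`, lies above
its tangent at `v = w`. This is convexity: the slope `sinh v (2 cosh v)^{k-1} / sinh (kv)`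
increases with `v > 0`.
-/

section Hyperbolic

theorem convexOn_sinh : ConvexOn ℝ (Set.Ici 0) sinh := by
  refine MonotoneOn.convexOn_of_deriv (convex_Ici 0) continuous_sinh.continuousOn
    differentiable_sinh.differentiableOn ?_
  rw [Real.deriv_sinh]
  exact cosh_strictMonoOn.monotoneOn.mono interior_subset

theorem mul_sinh_mul_le_mul_sinh_mul {a b x : ℝ} (ha : 0 ≤ a) (hab : a ≤ b) (hx : 0 ≤ x) :
    b * sinh (a * x) ≤ a * sinh (b * x) := by
  obtain rfl | hb := (ha.trans hab).eq_or_lt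
  · simp [le_antisymm hab ha]
  have hconv := convexOn_sinh.2 (Set.mem_Ici.2 (mul_nonneg hb.le hx)) Set.self_mem_Ici
    (div_nonneg ha hb.le) (sub_nonneg.2 (div_le_one_of_le₀ hab hb.le)) (add_sub_cancel _ _)
  have hax : a / b * (b * x) = a * x := by field_simp
  simp only [smul_eq_mul, mul_zero, add_zero, sinh_zero, hax] at hconv
  calc b * sinh (a * x) ≤ b * (a / b * sinh (b * x)) := by gcongr
    _ = a * sinh (b * x) := by field_simp

theorem sinh_abs_div_div_sinh_abs_div (x a b : ℝ) :
    sinh (|x| / a) / sinh (|x| / b) = sinh (x / a) / sinh (x / b) := by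
  obtain h | h := abs_choice x <;> simp only [h, neg_div, sinh_neg, div_neg, neg_neg]

theorem sinh_div_div_sinh_div_mem_Icc {a b : ℝ} (hb : 0 < b) (hba : b ≤ a) (x : ℝ) :
    sinh (x / a) / sinh (x / b) ∈ Set.Icc 0 1 := by
  have ha : 0 ≤ sinh (|x| / a) := sinh_nonneg_iff.2 (div_nonneg (abs_nonneg x) (hb.le.trans hba))
  have hab : sinh (|x| / a) ≤ sinh (|x| / b) := sinh_le_sinh.2 (by gcongr)
  rw [← sinh_abs_div_div_sinh_abs_div]
  exact ⟨div_nonneg ha (ha.trans hab), div_le_one_of_le₀ hab (ha.trans hab)⟩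

theorem two_mul_cosh_pos (v : ℝ) : 0 < 2 * cosh v := mul_pos two_pos (cosh_pos v)

theorem hasDerivAt_two_mul_cosh_rpow (a v : ℝ) :
    HasDerivAt (fun v ↦ (2 * cosh v) ^ a) (2 * sinh v * a * (2 * cosh v) ^ (a - 1)) v :=
  ((hasDerivAt_cosh v).const_mul 2).rpow_const (.inl (two_mul_cosh_pos v).ne')

/-- The ratio of the derivatives of `(2 cosh v) ^ k` and `2 cosh (k v)`, that is, the slope of the
first function with respect to the second. -/
noncomputable def coshSlope (k v : ℝ) : ℝ :=
  sinh v * (2 * cosh v) ^ (k - 1) / sinh (k * v)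

variable {k v w : ℝ}

theorem coshSlope_neg (k v : ℝ) : coshSlope k (-v) = coshSlope k v := by
  simp only [coshSlope, sinh_neg, cosh_neg, mul_neg, neg_mul, neg_div_neg_eq]

theorem hasDerivAt_coshSlope (hk : k ≠ 0) (hv : v ≠ 0) :
    HasDerivAt (coshSlope k) ((2 * cosh v) ^ (k - 2) *
      ((2 - k) * sinh (k * v) - k * sinh ((2 - k) * v)) / sinh (k * v) ^ 2) v := by
  have hs : sinh (k * v) ≠ 0 := sinh_eq_zero.not.2 (mul_ne_zero hk hv)
  have hd := ((hasDerivAt_sinh v).mul (hasDerivAt_two_mul_cosh_rpow (k - 1) v)).div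
    (((hasDerivAt_id v).const_mul k).sinh) hs
  refine hd.congr_deriv ?_
  have hpow : (2 * cosh v) ^ (k - 1) = (2 * cosh v) ^ (k - 2) * (2 * cosh v) := by
    rw [← rpow_add_one (two_mul_cosh_pos v).ne']
    ring_nf
  have hsinh : sinh ((2 - k) * v) =
      2 * sinh v * cosh v * cosh (k * v) - (cosh v ^ 2 + sinh v ^ 2) * sinh (k * v) := by
    rw [sub_mul, sinh_sub, sinh_two_mul, cosh_two_mul]
  rw [sub_sub, one_add_one_eq_two, Pi.mul_apply, hpow, hsinh]
  congr 1
  simp only [id]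
  linear_combination (2 * cosh v) ^ (k - 2) * (2 - k) * sinh (k * v) * cosh_sq_sub_sinh_sq v

theorem monotoneOn_coshSlope (hk1 : 1 ≤ k) (hk2 : k ≤ 2) :
    MonotoneOn (coshSlope k) (Set.Ioi 0) := by
  have hd (v : ℝ) (hv : 0 < v) := hasDerivAt_coshSlope (k := k) (by positivity) hv.ne'
  refine monotoneOn_of_deriv_nonneg (convex_Ioi 0)
    (fun v hv ↦ (hd v hv).continuousAt.continuousWithinAt) ?_ ?_ <;> rw [interior_Ioi]
  · exact fun v hv ↦ (hd v hv).differentiableAt.differentiableWithinAt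
  · intro v hv
    have hsinh : k * sinh ((2 - k) * v) ≤ (2 - k) * sinh (k * v) :=
      mul_sinh_mul_le_mul_sinh_mul (by linarith) (by linarith) (le_of_lt hv)
    rw [(hd v hv).deriv]
    exact div_nonneg (mul_nonneg (rpow_nonneg (two_mul_cosh_pos v).le _) (sub_nonneg.2 hsinh))
      (sq_nonneg _)

theorem isMinOn_two_mul_cosh_rpow_sub (hk1 : 1 ≤ k) (hk2 : k ≤ 2) (hw : 0 < w) :
    IsMinOn (fun v ↦ (2 * cosh v) ^ k - 2 * coshSlope k w * cosh (k * v)) (Set.Ici 0) w := by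
  have hk : 0 < k := by linarith
  have hd (v : ℝ) : HasDerivAt (fun v ↦ (2 * cosh v) ^ k - 2 * coshSlope k w * cosh (k * v))
      (2 * sinh v * k * (2 * cosh v) ^ (k - 1) - 2 * coshSlope k w * (sinh (k * v) * (k * 1))) v :=
    (hasDerivAt_two_mul_cosh_rpow k v).sub
      ((((hasDerivAt_id v).const_mul k).cosh).const_mul (2 * coshSlope k w))
  have hderiv (v : ℝ) (hv : 0 < v) :
      deriv (fun v ↦ (2 * cosh v) ^ k - 2 * coshSlope k w * cosh (k * v)) v =
        2 * k * sinh (k * v) * (coshSlope k v - coshSlope k w) := by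
    have hs : sinh (k * v) ≠ 0 := sinh_eq_zero.not.2 (mul_pos hk hv).ne'
    have hslope : coshSlope k v * sinh (k * v) = sinh v * (2 * cosh v) ^ (k - 1) :=
      div_mul_cancel₀ _ hs
    rw [(hd v).deriv]
    linear_combination -2 * k * hslope
  have hpos (v : ℝ) (hv : 0 < v) : 0 ≤ 2 * k * sinh (k * v) :=
    mul_nonneg (by positivity) (sinh_nonneg_iff.2 (by positivity))
  have hmono := monotoneOn_coshSlope hk1 hk2
  refine isMinOn_Ici_of_deriv (hd 0).continuousAt (hd w).continuousAt
    (fun v _ ↦ (hd v).differentiableAt.differentiableWithinAt)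
    (fun v _ ↦ (hd v).differentiableAt.differentiableWithinAt) ?_ ?_
  · intro v hv
    rw [hderiv v hv.1]
    exact mul_nonpos_of_nonneg_of_nonpos (hpos v hv.1) (sub_nonpos.2 (hmono hv.1 hw hv.2.le))
  · intro v hv
    have hv0 : 0 < v := hw.trans hv
    rw [hderiv v hv0]
    exact mul_nonneg (hpos v hv0) (sub_nonneg.2 (hmono hw hv0 (le_of_lt hv)))

theorem two_mul_cosh_rpow_add_coshSlope_mul_le (hk1 : 1 ≤ k) (hk2 : k ≤ 2) (hw : w ≠ 0) (v : ℝ) :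
    (2 * cosh w) ^ k + 2 * coshSlope k w * (cosh (k * v) - cosh (k * w)) ≤ (2 * cosh v) ^ k := by
  have habs (u : ℝ) : cosh (k * |u|) = cosh (k * u) := by
    rw [← cosh_abs, abs_mul, abs_abs, ← abs_mul, cosh_abs]
  have hslope : coshSlope k |w| = coshSlope k w := by
    obtain h | h := abs_choice w <;> simp only [h, coshSlope_neg]
  have hmin := isMinOn_iff.1 (isMinOn_two_mul_cosh_rpow_sub hk1 hk2 (abs_pos.2 hw))
    |v| (abs_nonneg v)
  simp only [habs, cosh_abs, hslope] at hmin
  linarith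

theorem sinh_mul_sq_cosh_add_sub {g : ℝ} (hg : g * sinh (k * w) = sinh ((2 - k) * w)) (t : ℝ) :
    sinh (k * w) *
        ((2 * cosh (k / 2 * t + w)) ^ 2 + g * (2 * sinh (k / 2 * t)) ^ 2 - (2 * cosh w) ^ 2) =
      2 * sinh (2 * w) * (cosh (k * (t + w)) - cosh (k * w)) := by
  have hsq_cosh (u : ℝ) : (2 * cosh u) ^ 2 = 2 * cosh (2 * u) + 2 := by
    rw [cosh_two_mul, sinh_sq]
    ring
  have hsq_sinh (u : ℝ) : (2 * sinh u) ^ 2 = 2 * cosh (2 * u) - 2 := by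
    rw [cosh_two_mul, cosh_sq]
    ring
  rw [hsq_cosh, hsq_cosh, hsq_sinh,
    show 2 * (k / 2 * t + w) = k * (t + w) + (2 - k) * w by ring,
    show 2 * (k / 2 * t) = k * (t + w) - k * w by ring,
    show 2 * w = k * w + (2 - k) * w by ring, cosh_add, cosh_add, sinh_add, cosh_sub]
  linear_combination
    (2 * cosh (k * (t + w)) * cosh (k * w) - 2 * sinh (k * (t + w)) * sinh (k * w) - 2) * hg +
      2 * sinh ((2 - k) * w) * cosh_sq_sub_sinh_sq (k * w)

theorem rpow_mul_sq_cosh_add_le {g : ℝ} (hk1 : 1 ≤ k) (hk2 : k ≤ 2) (hw : w ≠ 0)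
    (hg : g * sinh (k * w) = sinh ((2 - k) * w)) (t : ℝ) :
    (2 * cosh w) ^ (k - 2) *
        ((2 * cosh (k / 2 * t + w)) ^ 2 + g * (2 * sinh (k / 2 * t)) ^ 2) ≤
      (2 * cosh (t + w)) ^ k := by
  have hs : sinh (k * w) ≠ 0 := sinh_eq_zero.not.2 (mul_ne_zero (by positivity) hw)
  have hslope : (2 * cosh w) ^ (k - 2) * sinh (2 * w) = coshSlope k w * sinh (k * w) := by
    rw [coshSlope, div_mul_cancel₀ _ hs, sinh_two_mul,
      show k - 1 = k - 2 + 1 by ring, rpow_add_one (two_mul_cosh_pos w).ne']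
    ring
  have hpow : (2 * cosh w) ^ k = (2 * cosh w) ^ (k - 2) * (2 * cosh w) ^ 2 := by
    rw [← rpow_add_natCast (two_mul_cosh_pos w).ne']
    norm_num
  refine (le_of_eq ?_).trans (two_mul_cosh_rpow_add_coshSlope_mul_le hk1 hk2 hw (t + w))
  refine mul_left_cancel₀ hs ?_
  rw [hpow]
  linear_combination (2 * cosh w) ^ (k - 2) * sinh_mul_sq_cosh_add_sub hg t +
    2 * (cosh (k * (t + w)) - cosh (k * w)) * hslope

end Hyperbolic

section TwoPoint

/-- The log-odds `log (p / (1 - p))` of a success probability `p`. -/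
noncomputable def logOdds (p : ℝ) : ℝ :=
  log (p / (1 - p))

variable {p : ℝ}

theorem logOdds_one_sub (p : ℝ) : logOdds (1 - p) = -logOdds p := by
  rw [logOdds, logOdds, sub_sub_cancel, ← log_inv, inv_div]

theorem logOdds_ne_zero (hp : p ∈ Set.Ioo (0 : ℝ) 1) (hp' : p ≠ 1 / 2) : logOdds p ≠ 0 := by
  have h1p : 0 < 1 - p := sub_pos.2 hp.2
  refine log_ne_zero_of_pos_of_ne_one (div_pos hp.1 h1p) fun h ↦ hp' ?_
  linarith [(div_eq_one_iff_eq h1p.ne').1 h]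

theorem logOdds_min (hp : p ∈ Set.Ioo (0 : ℝ) 1) : logOdds (min p (1 - p)) = -|logOdds p| := by
  have h1p : 0 < 1 - p := sub_pos.2 hp.2
  obtain h | h := le_total p (1 - p)
  · have hle : logOdds p ≤ 0 :=
      log_nonpos (div_nonneg hp.1.le h1p.le) (div_le_one_of_le₀ h h1p.le)
    rw [min_eq_left h, abs_of_nonpos hle, neg_neg]
  · have hge : 0 ≤ logOdds p := log_nonneg ((one_le_div h1p).2 h)
    rw [min_eq_right h, logOdds_one_sub, abs_of_nonneg hge]

theorem sqrt_mul_exp_logOdds_div_two (hp : p ∈ Set.Ioo (0 : ℝ) 1) :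
    √(p * (1 - p)) * exp (logOdds p / 2) = p := by
  have h1p : 0 < 1 - p := sub_pos.2 hp.2
  rw [exp_half, logOdds, exp_log (div_pos hp.1 h1p), ← sqrt_mul (mul_pos hp.1 h1p).le,
    show p * (1 - p) * (p / (1 - p)) = p ^ 2 by field_simp, sqrt_sq hp.1.le]

theorem mul_exp_add_one_sub_mul_exp_neg (hp : p ∈ Set.Ioo (0 : ℝ) 1) (t : ℝ) :
    p * exp t + (1 - p) * exp (-t) = √(p * (1 - p)) * (2 * cosh (t + logOdds p / 2)) := by
  have hq := sqrt_mul_exp_logOdds_div_two (p := 1 - p) ⟨sub_pos.2 hp.2, sub_lt_self 1 hp.1⟩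
  rw [sub_sub_cancel, mul_comm (1 - p), logOdds_one_sub, neg_div] at hq
  rw [cosh_eq, neg_add, exp_add, exp_add]
  linear_combination (-exp t) * sqrt_mul_exp_logOdds_div_two hp - exp (-t) * hq

/-- The two-point inequality: on a single `p`-biased bit, the noise operator with parameter `δ` maps
`L^r` to `L²` with norm at most one, as tested on the nonnegative function with values `x` and `y`.
The left-hand side is the squared `L²` norm of the image, mean and variance part separated. -/
def TwoPointInequality (p r δ : ℝ) : Prop :=
  ∀ ⦃x y : ℝ⦄, 0 ≤ x → 0 ≤ y →
    (p * x + (1 - p) * y) ^ 2 + δ ^ 2 * (p * (1 - p)) * (x - y) ^ 2 ≤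
      (p * x ^ r + (1 - p) * y ^ r) ^ (2 / r)

variable {r q δ : ℝ}

theorem two_point_exp_le (hp : p ∈ Set.Ioo (0 : ℝ) 1) (hp' : p ≠ 1 / 2)
    (hrq : r.HolderConjugate q) (hr : r ≤ 2)
    (hδ : δ ^ 2 * sinh (logOdds p / r) = sinh (logOdds p / q)) (t : ℝ) :
    (p * exp (t / r) + (1 - p) * exp (-(t / r))) ^ 2 +
        δ ^ 2 * (p * (1 - p)) * (exp (t / r) - exp (-(t / r))) ^ 2 ≤
      (p * exp t + (1 - p) * exp (-t)) ^ (2 / r) := by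
  have hpq : 0 < p * (1 - p) := mul_pos hp.1 (sub_pos.2 hp.2)
  have hmoment := mul_exp_add_one_sub_mul_exp_neg hp
  have hc2 : √(p * (1 - p)) ^ 2 = p * (1 - p) := sq_sqrt hpq.le
  have hc0 : 0 < √(p * (1 - p)) := sqrt_pos.2 hpq
  generalize √(p * (1 - p)) = c at hmoment hc2 hc0
  have hcosh : 2 * cosh (logOdds p / 2) = c⁻¹ := by
    refine eq_inv_of_mul_eq_one_right ?_
    simpa only [neg_zero, exp_zero, mul_one, zero_add, add_sub_cancel] using (hmoment 0).symm
  have hpow : c ^ (2 / r) * (2 * cosh (logOdds p / 2)) ^ (2 / r - 2) = c ^ 2 := by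
    rw [hcosh, inv_rpow hc0.le, ← rpow_neg hc0.le, ← rpow_add hc0, neg_sub, add_sub_cancel,
      rpow_two]
  have hsinh : exp (t / r) - exp (-(t / r)) = 2 * sinh (t / r) := by
    rw [sinh_eq]
    ring
  have hbalance : δ ^ 2 * sinh (2 / r * (logOdds p / 2)) =
      sinh ((2 - 2 / r) * (logOdds p / 2)) := by
    rw [show 2 / r * (logOdds p / 2) = logOdds p / r by ring,
      show (2 - 2 / r) * (logOdds p / 2) = (1 - r⁻¹) * logOdds p by ring, hrq.one_sub_inv, hδ,
      inv_mul_eq_div]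
  have hcosh_le := rpow_mul_sq_cosh_add_le ((one_le_div hrq.pos).2 hr)
    (div_le_self zero_le_two hrq.lt.le) (div_ne_zero (logOdds_ne_zero hp hp') two_ne_zero)
    hbalance t
  rw [show 2 / r / 2 * t = t / r by ring] at hcosh_le
  rw [hmoment, hmoment, hsinh, mul_rpow hc0.le (two_mul_cosh_pos _).le, ← hc2]
  refine le_trans (le_of_eq ?_) (mul_le_mul_of_nonneg_left hcosh_le (rpow_nonneg hc0.le (2 / r)))
  rw [← mul_assoc (c ^ (2 / r)), hpow]
  ring

theorem two_point_le_of_pos (hp : p ∈ Set.Ioo (0 : ℝ) 1) (hp' : p ≠ 1 / 2)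
    (hrq : r.HolderConjugate q) (hr : r ≤ 2)
    (hδ : δ ^ 2 * sinh (logOdds p / r) = sinh (logOdds p / q)) {x y : ℝ} (hx : 0 < x)
    (hy : 0 < y) :
    (p * x + (1 - p) * y) ^ 2 + δ ^ 2 * (p * (1 - p)) * (x - y) ^ 2 ≤
      (p * x ^ r + (1 - p) * y ^ r) ^ (2 / r) := by
  have hr0 : r ≠ 0 := hrq.ne_zero
  -- By homogeneity only the ratio of `x` and `y` matters.
  obtain ⟨m, t, hm, rfl, rfl⟩ :
      ∃ m t : ℝ, 0 < m ∧ m * exp (t / r) = x ∧ m * exp (-(t / r)) = y := by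
    refine ⟨exp ((log x + log y) / 2), r * ((log x - log y) / 2), exp_pos _, ?_, ?_⟩
    · rw [← exp_add, mul_div_cancel_left₀ _ hr0, ← add_div, add_add_sub_cancel,
        add_self_div_two, exp_log hx]
    · rw [← exp_add, mul_div_cancel_left₀ _ hr0, ← sub_eq_add_neg, ← sub_div,
        add_sub_sub_cancel, add_self_div_two, exp_log hy]
  have hscale (u : ℝ) : (m * exp (u / r)) ^ r = m ^ r * exp u := by
    rw [mul_rpow hm.le (exp_pos _).le, ← exp_mul, div_mul_cancel₀ _ hr0]
  have hp0 := hp.1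
  have h1p : 0 < 1 - p := sub_pos.2 hp.2
  calc _ = m ^ 2 * ((p * exp (t / r) + (1 - p) * exp (-(t / r))) ^ 2 +
        δ ^ 2 * (p * (1 - p)) * (exp (t / r) - exp (-(t / r))) ^ 2) := by ring
    _ ≤ m ^ 2 * (p * exp t + (1 - p) * exp (-t)) ^ (2 / r) := by
        gcongr
        exact two_point_exp_le hp hp' hrq hr hδ t
    _ = (m ^ r * (p * exp t + (1 - p) * exp (-t))) ^ (2 / r) := by
        rw [mul_rpow (by positivity) (by positivity), ← rpow_mul hm.le, mul_div_cancel₀ _ hr0,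
          rpow_two]
    _ = _ := by
        rw [← neg_div, hscale, hscale]
        ring_nf

theorem twoPointInequality_of_sinh_eq (hp : p ∈ Set.Ioo (0 : ℝ) 1) (hp' : p ≠ 1 / 2)
    (hrq : r.HolderConjugate q) (hr : r ≤ 2)
    (hδ : δ ^ 2 * sinh (logOdds p / r) = sinh (logOdds p / q)) : TwoPointInequality p r δ := by
  intro x y hx hy
  have hr0 : 0 ≤ r := hrq.nonneg
  have hclosure : (x, y) ∈ closure (Set.Ioi (0 : ℝ) ×ˢ Set.Ioi (0 : ℝ)) := by
    rw [closure_prod_eq, closure_Ioi]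
    exact ⟨hx, hy⟩
  refine le_on_closure (f := fun z : ℝ × ℝ ↦
      (p * z.1 + (1 - p) * z.2) ^ 2 + δ ^ 2 * (p * (1 - p)) * (z.1 - z.2) ^ 2)
    (g := fun z ↦ (p * z.1 ^ r + (1 - p) * z.2 ^ r) ^ (2 / r))
    (fun z hz ↦ two_point_le_of_pos hp hp' hrq hr hδ hz.1 hz.2) ?_ ?_ hclosure
  · exact Continuous.continuousOn (by fun_prop)
  · refine Continuous.continuousOn ?_
    refine Continuous.rpow_const ?_ fun _ ↦ .inr (by positivity)
    exact ((continuous_fst.rpow_const fun _ ↦ .inr hr0).const_mul p).add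
      ((continuous_snd.rpow_const fun _ ↦ .inr hr0).const_mul (1 - p))

end TwoPoint

section BiasedExpectation

variable {p : ℝ} {n : ℕ}

theorem pwt_nonneg (hp : p ∈ Set.Icc (0 : ℝ) 1) (x : Fin n → Bool) : 0 ≤ pwt p x := by
  refine Finset.prod_nonneg fun i _ ↦ ?_
  split
  exacts [hp.1, sub_nonneg.2 hp.2]

theorem pwt_cons (p : ℝ) (b : Bool) (x : Fin n → Bool) :
    pwt p (Fin.cons b x : Fin (n + 1) → Bool) = (if b then p else 1 - p) * pwt p x := by
  simp only [pwt, Fin.prod_univ_succ, Fin.cons_zero, Fin.cons_succ]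

theorem pE_nonneg (hp : p ∈ Set.Icc (0 : ℝ) 1) {f : (Fin n → Bool) → ℝ} (hf : ∀ x, 0 ≤ f x) :
    0 ≤ pE p f :=
  Finset.sum_nonneg fun x _ ↦ mul_nonneg (pwt_nonneg hp x) (hf x)

theorem pE_fin_zero (p : ℝ) (f : (Fin 0 → Bool) → ℝ) (x : Fin 0 → Bool) : pE p f = f x := by
  rw [pE, Fintype.sum_subsingleton _ x, pwt, Fin.prod_univ_zero, one_mul]

theorem pE_cons (p : ℝ) (f : (Fin (n + 1) → Bool) → ℝ) :
    pE p f = p * pE p (fun x ↦ f (Fin.cons true x)) +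
      (1 - p) * pE p (fun x ↦ f (Fin.cons false x)) := by
  rw [pE, ← (Fin.consEquiv fun _ ↦ Bool).sum_comp, Fintype.sum_prod_type, Fintype.sum_bool, pE,
    pE, Finset.mul_sum, Finset.mul_sum]
  simp only [Fin.consEquiv, Equiv.coe_fn_mk, pwt_cons, if_true, Bool.false_eq_true, if_false,
    mul_assoc]

theorem pE_const_mul (p c : ℝ) (f : (Fin n → Bool) → ℝ) :
    pE p (fun x ↦ c * f x) = c * pE p f := by
  simp only [pE, mul_left_comm _ c, ← Finset.mul_sum]

theorem pE_sq_add (p a b : ℝ) (f g : (Fin n → Bool) → ℝ) :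
    pE p (fun x ↦ (a * f x + b * g x) ^ 2) =
      a ^ 2 * pE p (fun x ↦ f x ^ 2) + 2 * a * b * pE p (fun x ↦ f x * g x) +
        b ^ 2 * pE p (fun x ↦ g x ^ 2) := by
  simp only [pE, Finset.mul_sum, ← Finset.sum_add_distrib]
  exact Finset.sum_congr rfl fun x _ ↦ by ring

theorem pNorm_nonneg (hp : p ∈ Set.Icc (0 : ℝ) 1) (q : ℝ) (f : (Fin n → Bool) → ℝ) :
    0 ≤ pNorm p q f :=
  rpow_nonneg (pE_nonneg hp fun _ ↦ rpow_nonneg (abs_nonneg _) _) _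

theorem pNorm_rpow (hp : p ∈ Set.Icc (0 : ℝ) 1) {q : ℝ} (hq : q ≠ 0) (f : (Fin n → Bool) → ℝ) :
    pNorm p q f ^ q = pE p fun x ↦ |f x| ^ q := by
  rw [pNorm, one_div, rpow_inv_rpow (pE_nonneg hp fun _ ↦ rpow_nonneg (abs_nonneg _) _) hq]

theorem pNorm_two_sq (hp : p ∈ Set.Icc (0 : ℝ) 1) (f : (Fin n → Bool) → ℝ) :
    pNorm p 2 f ^ 2 = pE p fun x ↦ f x ^ 2 := by
  rw [← rpow_two, pNorm_rpow hp two_ne_zero]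
  simp only [rpow_two, sq_abs]

theorem pNorm_fin_zero (p : ℝ) {q : ℝ} (hq : q ≠ 0) (f : (Fin 0 → Bool) → ℝ) :
    pNorm p q f = |f default| := by
  rw [pNorm, pE_fin_zero p _ default, one_div, rpow_rpow_inv (abs_nonneg _) hq]

theorem pNorm_cons_rpow (hp : p ∈ Set.Icc (0 : ℝ) 1) {q : ℝ} (hq : q ≠ 0)
    (f : (Fin (n + 1) → Bool) → ℝ) :
    pNorm p q f ^ q = p * pNorm p q (fun x ↦ f (Fin.cons true x)) ^ q +
      (1 - p) * pNorm p q (fun x ↦ f (Fin.cons false x)) ^ q := by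
  rw [pNorm_rpow hp hq, pNorm_rpow hp hq, pNorm_rpow hp hq, pE_cons]

theorem pE_mul_le_pNorm_mul_pNorm (hp : p ∈ Set.Icc (0 : ℝ) 1) (f g : (Fin n → Bool) → ℝ) :
    pE p (fun x ↦ f x * g x) ≤ pNorm p 2 f * pNorm p 2 g := by
  refine le_of_sq_le_sq ?_ (mul_nonneg (pNorm_nonneg hp 2 f) (pNorm_nonneg hp 2 g))
  rw [mul_pow, pNorm_two_sq hp, pNorm_two_sq hp]
  refine Finset.sum_sq_le_sum_mul_sum_of_sq_le_mul _
    (fun x _ ↦ mul_nonneg (pwt_nonneg hp x) (sq_nonneg _))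
    (fun x _ ↦ mul_nonneg (pwt_nonneg hp x) (sq_nonneg _)) fun x _ ↦ le_of_eq ?_
  ring

theorem mul_abs_rpow_div_self {q : ℝ} (hq : q ≠ 0) (x : ℝ) : x * (|x| ^ q / x) = |x| ^ q := by
  obtain rfl | hx := eq_or_ne x 0
  · rw [abs_zero, zero_rpow hq, zero_mul]
  · exact mul_div_cancel₀ _ hx

theorem abs_abs_rpow_div_self_rpow {r q : ℝ} (hrq : r.HolderConjugate q) (x : ℝ) :
    |(|x| ^ q / x)| ^ r = |x| ^ q := by
  obtain rfl | hx := eq_or_ne x 0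
  · rw [div_zero, abs_zero, zero_rpow hrq.ne_zero, zero_rpow hrq.symm.ne_zero]
  · rw [abs_div, abs_of_nonneg (rpow_nonneg (abs_nonneg x) q), ← rpow_sub_one (abs_ne_zero.2 hx),
      ← rpow_mul (abs_nonneg x), hrq.symm.sub_one_mul_conj]

theorem pNorm_le_of_forall_pE_mul_le (hp : p ∈ Set.Icc (0 : ℝ) 1) {r q : ℝ}
    (hrq : r.HolderConjugate q) {f : (Fin n → Bool) → ℝ} {C : ℝ} (hC : 0 ≤ C)
    (h : ∀ g, pE p (fun x ↦ f x * g x) ≤ C * pNorm p r g) : pNorm p q f ≤ C := by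
  -- The extremal function is `sign f * |f| ^ (q - 1)`; where `f` vanishes, `x / 0 = 0` applies.
  have hle := h fun x ↦ |f x| ^ q / f x
  simp only [pNorm, mul_abs_rpow_div_self hrq.symm.ne_zero, abs_abs_rpow_div_self_rpow hrq] at hle ⊢
  have hQ0 : 0 ≤ pE p fun x ↦ |f x| ^ q := pE_nonneg hp fun _ ↦ rpow_nonneg (abs_nonneg _) _
  generalize (pE p fun x ↦ |f x| ^ q) = Q at hle hQ0 ⊢
  obtain hQ' | hQ' := hQ0.eq_or_lt
  · rwa [← hQ', zero_rpow (one_div_ne_zero hrq.symm.ne_zero)]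
  · have hexp : 1 / q = 1 - 1 / r := by rw [one_div, one_div, hrq.one_sub_inv]
    rw [hexp, rpow_sub hQ', rpow_one]
    exact (div_le_iff₀ (rpow_pos_of_pos hQ' _)).2 hle

end BiasedExpectation

section Noise

variable {p δ : ℝ} {n : ℕ}

/-- The normalised one-bit character `χ_i`, as a function of the `i`-th bit alone; the bit `true`
stands for the value `1` and `false` for `-1`. -/
noncomputable def chiBit (p : ℝ) (b : Bool) : ℝ :=
  ((if b then (1 : ℝ) else -1) - (2 * p - 1)) / (2 * √(p * (1 - p)))

theorem chiBit_mul_chiBit (hp : p ∈ Set.Ioo (0 : ℝ) 1) (a b : Bool) :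
    chiBit p a * chiBit p b =
      ((if a then 1 else -1) - (2 * p - 1)) * ((if b then 1 else -1) - (2 * p - 1)) /
        (4 * (p * (1 - p))) := by
  have hsq : √(p * (1 - p)) * √(p * (1 - p)) = p * (1 - p) :=
    mul_self_sqrt (mul_pos hp.1 (sub_pos.2 hp.2)).le
  rw [chiBit, chiBit, div_mul_div_comm, mul_mul_mul_comm, hsq]
  norm_num only

/-- The integral kernel of the noise operator with respect to the `p`-biased measure. -/
noncomputable def noiseKernel (p δ : ℝ) (x y : Fin n → Bool) : ℝ :=
  ∏ i, (1 + δ * (chiBit p (x i) * chiBit p (y i)))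

theorem noiseKernel_comm (p δ : ℝ) (x y : Fin n → Bool) :
    noiseKernel p δ x y = noiseKernel p δ y x := by
  simp only [noiseKernel, mul_comm (chiBit p (x _))]

theorem noiseKernel_cons (p δ : ℝ) (a b : Bool) (x y : Fin n → Bool) :
    noiseKernel p δ (Fin.cons a x : Fin (n + 1) → Bool) (Fin.cons b y) =
      (1 + δ * (chiBit p a * chiBit p b)) * noiseKernel p δ x y := by
  simp only [noiseKernel, Fin.prod_univ_succ, Fin.cons_zero, Fin.cons_succ]

theorem sum_pow_mul_chi_mul_chi (p δ : ℝ) (x y : Fin n → Bool) :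
    ∑ S, δ ^ S.card * (chi p S x * chi p S y) = noiseKernel p δ x y := by
  rw [noiseKernel, Finset.prod_one_add, Finset.powerset_univ]
  refine Finset.sum_congr rfl fun S _ ↦ ?_
  rw [Finset.prod_mul_distrib, Finset.prod_const, Finset.prod_mul_distrib]
  rfl

theorem noiseOp_eq_pE (p δ : ℝ) (f : (Fin n → Bool) → ℝ) (x : Fin n → Bool) :
    noiseOp p δ f x = pE p fun y ↦ noiseKernel p δ x y * f y := by
  simp only [noiseOp, fhat, pE, ← sum_pow_mul_chi_mul_chi, Finset.mul_sum, Finset.sum_mul]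
  rw [Finset.sum_comm]
  exact Finset.sum_congr rfl fun y _ ↦ Finset.sum_congr rfl fun S _ ↦ by ring

theorem pE_noiseOp_mul (p δ : ℝ) (f g : (Fin n → Bool) → ℝ) :
    pE p (fun x ↦ noiseOp p δ f x * g x) = pE p fun x ↦ f x * noiseOp p δ g x := by
  simp only [noiseOp_eq_pE, pE, Finset.mul_sum, Finset.sum_mul]
  rw [Finset.sum_comm]
  refine Finset.sum_congr rfl fun y _ ↦ Finset.sum_congr rfl fun x _ ↦ ?_
  rw [noiseKernel_comm p δ x y]
  ring

theorem noiseOp_fin_zero (p δ : ℝ) (f : (Fin 0 → Bool) → ℝ) : noiseOp p δ f = f := by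
  funext x
  rw [noiseOp_eq_pE, pE_fin_zero p _ x, noiseKernel, Fin.prod_univ_zero, one_mul]

theorem noiseOp_cons (p δ : ℝ) (f : (Fin (n + 1) → Bool) → ℝ) (a : Bool) (x : Fin n → Bool) :
    noiseOp p δ f (Fin.cons a x) =
      p * ((1 + δ * (chiBit p a * chiBit p true)) *
          noiseOp p δ (fun y ↦ f (Fin.cons true y)) x) +
        (1 - p) * ((1 + δ * (chiBit p a * chiBit p false)) *
          noiseOp p δ (fun y ↦ f (Fin.cons false y)) x) := by
  simp only [noiseOp_eq_pE, noiseKernel_cons, pE_cons, mul_assoc, pE_const_mul]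

theorem noiseOp_cons_true (hp : p ∈ Set.Ioo (0 : ℝ) 1) (δ : ℝ) (f : (Fin (n + 1) → Bool) → ℝ)
    (x : Fin n → Bool) :
    noiseOp p δ f (Fin.cons true x) =
      (p + δ * (1 - p)) * noiseOp p δ (fun y ↦ f (Fin.cons true y)) x +
        (1 - p) * (1 - δ) * noiseOp p δ (fun y ↦ f (Fin.cons false y)) x := by
  have hp0 : p ≠ 0 := hp.1.ne'
  have h1p : 1 - p ≠ 0 := (sub_pos.2 hp.2).ne'
  simp only [noiseOp_cons, chiBit_mul_chiBit hp, if_true, Bool.false_eq_true, if_false]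
  field_simp
  ring

theorem noiseOp_cons_false (hp : p ∈ Set.Ioo (0 : ℝ) 1) (δ : ℝ) (f : (Fin (n + 1) → Bool) → ℝ)
    (x : Fin n → Bool) :
    noiseOp p δ f (Fin.cons false x) =
      p * (1 - δ) * noiseOp p δ (fun y ↦ f (Fin.cons true y)) x +
        (1 - p + δ * p) * noiseOp p δ (fun y ↦ f (Fin.cons false y)) x := by
  have hp0 : p ≠ 0 := hp.1.ne'
  have h1p : 1 - p ≠ 0 := (sub_pos.2 hp.2).ne'
  simp only [noiseOp_cons, chiBit_mul_chiBit hp, if_true, Bool.false_eq_true, if_false]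
  field_simp
  ring

theorem pE_noiseOp_cons_sq (hp : p ∈ Set.Ioo (0 : ℝ) 1) (δ : ℝ) (f : (Fin (n + 1) → Bool) → ℝ) :
    pE p (fun x ↦ noiseOp p δ f x ^ 2) =
      (p ^ 2 + δ ^ 2 * (p * (1 - p))) *
          pE p (fun x ↦ noiseOp p δ (fun y ↦ f (Fin.cons true y)) x ^ 2) +
        2 * (p * (1 - p)) * (1 - δ ^ 2) *
          pE p (fun x ↦ noiseOp p δ (fun y ↦ f (Fin.cons true y)) x *
            noiseOp p δ (fun y ↦ f (Fin.cons false y)) x) +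
        ((1 - p) ^ 2 + δ ^ 2 * (p * (1 - p))) *
          pE p (fun x ↦ noiseOp p δ (fun y ↦ f (Fin.cons false y)) x ^ 2) := by
  simp only [pE_cons p fun x ↦ noiseOp p δ f x ^ 2, noiseOp_cons_true hp, noiseOp_cons_false hp,
    pE_sq_add]
  ring

theorem pNorm_noiseOp_cons_sq_le (hp : p ∈ Set.Ioo (0 : ℝ) 1) (hδ : δ ^ 2 ≤ 1)
    (f : (Fin (n + 1) → Bool) → ℝ) {a b : ℝ}
    (ha : pNorm p 2 (noiseOp p δ fun x ↦ f (Fin.cons true x)) ≤ a)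
    (hb : pNorm p 2 (noiseOp p δ fun x ↦ f (Fin.cons false x)) ≤ b) :
    pNorm p 2 (noiseOp p δ f) ^ 2 ≤
      (p * a + (1 - p) * b) ^ 2 + δ ^ 2 * (p * (1 - p)) * (a - b) ^ 2 := by
  have hp' := Set.Ioo_subset_Icc_self hp
  have hpq : 0 ≤ p * (1 - p) := mul_nonneg hp'.1 (sub_nonneg.2 hp'.2)
  have : 0 ≤ 1 - δ ^ 2 := sub_nonneg.2 hδ
  have hnonneg (g : (Fin n → Bool) → ℝ) : 0 ≤ pNorm p 2 g := pNorm_nonneg hp' 2 g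
  have ha0 : 0 ≤ a := (hnonneg _).trans ha
  rw [pNorm_two_sq hp', pE_noiseOp_cons_sq hp, ← pNorm_two_sq hp', ← pNorm_two_sq hp']
  calc _ ≤ (p ^ 2 + δ ^ 2 * (p * (1 - p))) * a ^ 2 +
        2 * (p * (1 - p)) * (1 - δ ^ 2) * (a * b) +
        ((1 - p) ^ 2 + δ ^ 2 * (p * (1 - p))) * b ^ 2 := by
        gcongr
        · exact hnonneg _
        · exact (pE_mul_le_pNorm_mul_pNorm hp' _ _).trans (mul_le_mul ha hb (hnonneg _) ha0)
        · exact hnonneg _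
    _ = _ := by ring

theorem pNorm_two_noiseOp_le {r : ℝ} (hp : p ∈ Set.Ioo (0 : ℝ) 1) (hr : 0 < r) (hδ : δ ^ 2 ≤ 1)
    (h : TwoPointInequality p r δ) (f : (Fin n → Bool) → ℝ) :
    pNorm p 2 (noiseOp p δ f) ≤ pNorm p r f := by
  have hp' := Set.Ioo_subset_Icc_self hp
  induction n with
  | zero => rw [noiseOp_fin_zero, pNorm_fin_zero p two_ne_zero, pNorm_fin_zero p hr.ne']
  | succ n ih =>
    have htwo := h (pNorm_nonneg hp' r fun x ↦ f (Fin.cons true x))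
      (pNorm_nonneg hp' r fun x ↦ f (Fin.cons false x))
    rw [← pNorm_cons_rpow hp' hr.ne', ← rpow_mul (pNorm_nonneg hp' r f),
      mul_div_cancel₀ _ hr.ne', rpow_two] at htwo
    exact le_of_sq_le_sq ((pNorm_noiseOp_cons_sq_le hp hδ f (ih _) (ih _)).trans htwo)
      (pNorm_nonneg hp' r f)

theorem pNorm_noiseOp_le_of_dual (hp : p ∈ Set.Icc (0 : ℝ) 1) {r q : ℝ}
    (hrq : r.HolderConjugate q)
    (h : ∀ g : (Fin n → Bool) → ℝ, pNorm p 2 (noiseOp p δ g) ≤ pNorm p r g)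
    (f : (Fin n → Bool) → ℝ) : pNorm p q (noiseOp p δ f) ≤ pNorm p 2 f := by
  have hf := pNorm_nonneg hp 2 f
  refine pNorm_le_of_forall_pE_mul_le hp hrq hf fun g ↦ ?_
  calc pE p (fun x ↦ noiseOp p δ f x * g x)
      = pE p (fun x ↦ f x * noiseOp p δ g x) := pE_noiseOp_mul p δ f g
    _ ≤ pNorm p 2 f * pNorm p 2 (noiseOp p δ g) := pE_mul_le_pNorm_mul_pNorm hp f _
    _ ≤ pNorm p 2 f * pNorm p r g := mul_le_mul_of_nonneg_left (h g) hf

theorem le_two_iff_of_holderConjugate {r q : ℝ} (hrq : r.HolderConjugate q) : r ≤ 2 ↔ 2 ≤ q := by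
  rw [← inv_le_inv₀ two_pos hrq.pos, ← hrq.symm.one_sub_inv, le_sub_comm,
    show (1 : ℝ) - 2⁻¹ = 2⁻¹ by norm_num, inv_le_inv₀ hrq.symm.pos two_pos]

theorem pNorm_noiseOp_le_pNorm_two (hp : p ∈ Set.Ioo (0 : ℝ) 1) (hp' : p ≠ 1 / 2) {r q : ℝ}
    (hrq : r.HolderConjugate q) (hq : 2 ≤ q)
    (hδ : δ ^ 2 = sinh (logOdds p / q) / sinh (logOdds p / r)) (f : (Fin n → Bool) → ℝ) :
    pNorm p q (noiseOp p δ f) ≤ pNorm p 2 f := by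
  have hr : r ≤ 2 := (le_two_iff_of_holderConjugate hrq).2 hq
  have hsinh : sinh (logOdds p / r) ≠ 0 :=
    sinh_eq_zero.not.2 (div_ne_zero (logOdds_ne_zero hp hp') hrq.ne_zero)
  have htwo : TwoPointInequality p r δ :=
    twoPointInequality_of_sinh_eq hp hp' hrq hr (by rw [hδ, div_mul_cancel₀ _ hsinh])
  have hδ1 : δ ^ 2 ≤ 1 := hδ ▸ (sinh_div_div_sinh_div_mem_Icc hrq.pos (hr.trans hq) _).2
  exact pNorm_noiseOp_le_of_dual (Set.Ioo_subset_Icc_self hp) hrq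
    (pNorm_two_noiseOp_le hp hrq.pos hδ1 htwo) f

end Noise

/-- Hypercontractivity for the p-biased measure, smoothing parameter (ii) of Latała–Oleszkiewicz:
γ = √( sinh(-(1/q)L) / sinh(-(1-1/q)L) ) with L = ln(λ/(1-λ)). -/
theorem stmt2 (p : ℝ) (hp : p ∈ Set.Ioo (0:ℝ) 1) (hp' : p ≠ 1/2) (q : ℝ) (hq : 2 ≤ q)
    (L : ℝ) (hL : L = Real.log (min p (1 - p) / (1 - min p (1 - p))))
    (γ : ℝ)
    (hγ : γ = Real.sqrt (Real.sinh (-(1/q) * L) / Real.sinh (-(1 - 1/q) * L)))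
    (n : ℕ) (f : (Fin n → Bool) → ℝ) :
    pNorm p q (noiseOp p γ f) ≤ pNorm p 2 f := by
  have hqr := HolderConjugate.conjExponent (one_lt_two.trans_le hq)
  have hr : q.conjExponent ≤ q := ((le_two_iff_of_holderConjugate hqr.symm).2 hq).trans hq
  have hL' : L = -|logOdds p| := hL.trans (logOdds_min hp)
  have hLq : -(1 / q) * L = |logOdds p| / q := by
    rw [hL', neg_mul_neg, one_div_mul_eq_div]
  have hLr : -(1 - 1 / q) * L = |logOdds p| / q.conjExponent := by
    rw [hL', neg_mul_neg, one_div, hqr.one_sub_inv, inv_mul_eq_div]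
  have hγ2 : γ ^ 2 = sinh (logOdds p / q) / sinh (logOdds p / q.conjExponent) := by
    rw [hγ, hLq, hLr, sinh_abs_div_div_sinh_abs_div,
      sq_sqrt (sinh_div_div_sinh_div_mem_Icc hqr.symm.pos hr _).1]
  exact pNorm_noiseOp_le_pNorm_two hp hp' hqr.symm hq hγ2 f
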